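/- Let f : ℝ/ℤ → [0,1] be a Borel function such that either f ≤ 1/2 almost everywhere or f ≥ 1/2 almost everywhere, and let q ≥ 2 be an integer. Then the limit lim_{N→∞} ( log S_N^{(q)}(f) ) / ( −(q−1)·N·log 2 ) exists as a real number (and equals the infimum over N ≥ 1 of ( log S_N^{(q)}(f) ) / ( −(q−1)·N·log 2 ) up to sign convention, by submultiplicativity and Fekete's lemma); equivalently, the L^q-dimension dim_q μ_f^+ of the one-sided stationary determinantal measure exists. -/

import Mathlib

open MeasureTheory Matrix Filter

/-- The `n`-th Fourier coefficient of a function on the circle `ℝ/ℤ`. -/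
noncomputable def fhat (f : AddCircle (1:ℝ) → ℝ) (n : ℤ) : ℂ :=
  fourierCoeff (fun t => (f t : ℂ)) n

/-- A boolean seen as the complex number `0` or `1`. -/
def bc (b : Bool) : ℂ := if b then 1 else 0

/-- The `N×N` Toeplitz matrix `T_N(f) = (f̂(i-j))_{1 ≤ i,j ≤ N}`. -/
noncomputable def Tmat (f : AddCircle (1:ℝ) → ℝ) (N : ℕ) : Matrix (Fin N) (Fin N) ℂ :=
  Matrix.of fun i j => fhat f (((i : ℕ) : ℤ) - ((j : ℕ) : ℤ))

/-- The cylinder weight `μ_f^+([ε]) = det(D_N(2ε-1)·T_N(f) + D_N(1-ε))`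
(a real number, taken as the real part of the complex determinant). -/
noncomputable def cylWeight (f : AddCircle (1:ℝ) → ℝ) {N : ℕ} (ε : Fin N → Bool) : ℝ :=
  ((Matrix.diagonal (fun i => 2 * bc (ε i) - 1) * Tmat f N +
      Matrix.diagonal (fun i => 1 - bc (ε i))).det).re

/-- `S_N^{(q)}(f) = Σ_{ε ∈ {0,1}^N} det(D_N(2ε-1)·T_N(f) + D_N(1-ε))^q`. -/
noncomputable def Sq (f : AddCircle (1:ℝ) → ℝ) (q N : ℕ) : ℝ :=
  ∑ ε : Fin N → Bool, (cylWeight f ε) ^ q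


open scoped MatrixOrder ComplexOrder in
lemma det_re_le_exp {n : Type*} [Fintype n] [DecidableEq n] {K : Matrix n n ℂ}
    (hK : K.PosSemidef) : K.det.re ≤ Real.exp (K.trace.re - Fintype.card n) := by
  rw [hK.1.det_eq_prod_eigenvalues, hK.1.trace_eq_sum_eigenvalues]
  have e1 : (∏ i, ((hK.1.eigenvalues i : ℝ) : ℂ)).re = ∏ i, hK.1.eigenvalues i := by
    rw [← Complex.ofReal_prod, Complex.ofReal_re]
  have e2 : (∑ i, ((hK.1.eigenvalues i : ℝ) : ℂ)).re = ∑ i, hK.1.eigenvalues i := by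
    rw [← Complex.ofReal_sum, Complex.ofReal_re]
  have e3 : (∑ i, hK.1.eigenvalues i) - Fintype.card n = ∑ i, (hK.1.eigenvalues i - 1) := by
    simp
  refine (le_of_eq e1).trans ?_
  refine le_trans ?_ (le_of_eq (congrArg (fun x => Real.exp (x - Fintype.card n)) e2.symm))
  simp only [e3, Real.exp_sum]
  refine Finset.prod_le_prod (fun i _ => hK.eigenvalues_nonneg i) fun i _ => ?_
  have := Real.add_one_le_exp (hK.1.eigenvalues i - 1)
  linarith

open scoped ComplexOrder in
lemma det_nn {n : Type*} [Fintype n] [DecidableEq n] {K : Matrix n n ℂ}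
    (hK : K.PosSemidef) : 0 ≤ K.det.re ∧ K.det.im = 0 := by
  have := Complex.nonneg_iff.1 hK.det_nonneg
  exact ⟨this.1, this.2.symm⟩

open scoped MatrixOrder ComplexOrder in
lemma fischer {m n : Type*} [Fintype m] [DecidableEq m] [Fintype n] [DecidableEq n]
    {M : Matrix (m ⊕ n) (m ⊕ n) ℂ} (hM : M.PosSemidef) :
    M.det.re ≤ M.toBlocks₁₁.det.re * M.toBlocks₂₂.det.re := by
  have hA : M.toBlocks₁₁.PosSemidef := hM.submatrix Sum.inl
  have hD : M.toBlocks₂₂.PosSemidef := hM.submatrix Sum.inr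
  by_cases h0 : M.det = 0
  · rw [h0]; exact mul_nonneg (det_nn hA).1 (det_nn hD).1
  have hMp := hM.posDef_iff_det_ne_zero.2 h0
  have hAp : M.toBlocks₁₁.PosDef := hMp.submatrix Sum.inl_injective
  have hDp : M.toBlocks₂₂.PosDef := hMp.submatrix Sum.inr_injective
  obtain ⟨X, hX⟩ := CStarAlgebra.nonneg_iff_eq_star_mul_self.mp hA.inv.nonneg
  obtain ⟨Y, hY⟩ := CStarAlgebra.nonneg_iff_eq_star_mul_self.mp hD.inv.nonneg
  have uA : IsUnit M.toBlocks₁₁.det := (isUnit_iff_isUnit_det _).1 hAp.isUnit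
  have uD : IsUnit M.toBlocks₂₂.det := (isUnit_iff_isUnit_det _).1 hDp.isUnit
  have gA := (Complex.pos_iff.1 hAp.det_pos)
  have gD := (Complex.pos_iff.1 hDp.det_pos)
  set A := M.toBlocks₁₁ with hAd
  set D := M.toBlocks₂₂ with hDd
  let Z : Matrix (m ⊕ n) (m ⊕ n) ℂ := fromBlocks X 0 0 Y
  have hZ : Zᴴ * Z = fromBlocks A⁻¹ 0 0 D⁻¹ := by
    simp [Z, fromBlocks_conjTranspose, fromBlocks_multiply, hX, hY, star_eq_conjTranspose]
  have hK := hM.mul_mul_conjTranspose_same Z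
  have ht : (Z * M * Zᴴ).trace = Fintype.card (m ⊕ n) := by
    rw [Matrix.trace_mul_comm, ← Matrix.mul_assoc, hZ]
    conv_lhs => rw [← fromBlocks_toBlocks M]
    rw [fromBlocks_multiply]
    simp only [Matrix.zero_mul, add_zero, zero_add]
    rw [← hAd, ← hDd, nonsing_inv_mul _ uA, nonsing_inv_mul _ uD]
    simp [Matrix.trace]
  have hd : (Z * M * Zᴴ).det * (A.det * D.det) = M.det := by
    have : (Z * M * Zᴴ).det = (Zᴴ * Z).det * M.det := by
      simp only [det_mul]; ring
    rw [this, hZ, det_fromBlocks_zero₂₁, det_nonsing_inv, det_nonsing_inv]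
    calc _ = (Ring.inverse A.det * A.det) * (Ring.inverse D.det * D.det) * M.det := by ring
      _ = _ := by rw [Ring.inverse_mul_cancel _ uA, Ring.inverse_mul_cancel _ uD]; ring
  have hle := det_re_le_exp hK
  rw [ht] at hle
  simp at hle
  have hk := det_nn hK
  rw [← hd]
  simp only [Complex.mul_re, Complex.mul_im, ← gA.2, ← gD.2]
  have := mul_pos gA.1 gD.1
  simp only [det_mul] at hk hle ⊢
  simp at hk hle ⊢
  nlinarith

/-- principal minor -/
noncomputable def pm {ι : Type*} [DecidableEq ι] (B : Matrix ι ι ℂ) (S : Finset ι) : ℝ :=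
  (B.submatrix (fun i : S => (i:ι)) (fun i : S => (i:ι))).det.re

def sg (b : Bool) : ℝ := if b then 1 else -1

noncomputable def PP {ι : Type*} [Fintype ι] [DecidableEq ι] (B : Matrix ι ι ℂ) (q : ℕ) : ℝ :=
  ∑ δ : ι → Bool, ((1 + Matrix.diagonal (fun i => ((sg (δ i) : ℝ) : ℂ)) * B).det.re) ^ q

open scoped ComplexOrder in
lemma pm_nonneg {ι : Type*} [DecidableEq ι] {B : Matrix ι ι ℂ} (hB : B.PosSemidef)
    (S : Finset ι) : 0 ≤ pm B S := (det_nn (hB.submatrix _)).1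

open scoped ComplexOrder in
lemma pm_disjSum {ι κ : Type*} [DecidableEq ι] [DecidableEq κ]
    {B : Matrix (ι ⊕ κ) (ι ⊕ κ) ℂ} (hB : B.PosSemidef) (S : Finset ι) (T : Finset κ) :
    pm B (S.disjSum T) ≤ pm B.toBlocks₁₁ S * pm B.toBlocks₂₂ T := by
  let e : S ⊕ T → {x // x ∈ S.disjSum T} := fun x => match x with
    | .inl i => ⟨.inl i, by simp⟩
    | .inr i => ⟨.inr i, by simp⟩
  have he : Function.Bijective e := by
    constructor
    · rintro (⟨i, hi⟩ | ⟨i, hi⟩) (⟨j, hj⟩ | ⟨j, hj⟩) h <;> simp [e] at h ⊢ <;> exact h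
    · rintro ⟨(i | i), hi⟩
      · exact ⟨.inl ⟨i, by simpa using hi⟩, rfl⟩
      · exact ⟨.inr ⟨i, by simpa using hi⟩, rfl⟩
  unfold pm
  rw [← det_submatrix_equiv_self (Equiv.ofBijective e he)]
  exact fischer ((hB.submatrix _).submatrix _)

open scoped ComplexOrder in
lemma det_expand {ι : Type*} [Fintype ι] [DecidableEq ι] {B : Matrix ι ι ℂ}
    (s : ι → ℝ) :
    (1 + Matrix.diagonal (fun i => ((s i : ℝ) : ℂ)) * B).det.re =
      ∑ S : Finset ι, (∏ i ∈ S, s i) * pm B S := by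
  have h1 : (1 + Matrix.diagonal (fun i => ((s i : ℝ) : ℂ)) * B).det =
      ∑ S : Finset ι, ((∏ i ∈ S, s i : ℝ) : ℂ) *
        (B.submatrix (fun i : S => (i:ι)) (fun i : S => (i:ι))).det := by
    rw [add_comm]
    refine ((detRowAlternating (n := ι) (R := ℂ)).toMultilinearMap.map_add_univ _ _).trans ?_
    refine Finset.sum_congr rfl fun S _ => ?_
    refine (det_piecewise_one_eq_submatrix_det _ S).trans ?_
    have : (Matrix.diagonal (fun i => ((s i : ℝ) : ℂ)) * B).submatrix
        (fun i : S => (i:ι)) (fun i : S => (i:ι)) =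
        Matrix.diagonal (fun i : S => ((s i : ℝ) : ℂ)) *
          B.submatrix (fun i : S => (i:ι)) (fun i : S => (i:ι)) := by
      ext i j; simp [diagonal_mul]
    refine (congrArg det this).trans ?_
    rw [det_mul, det_diagonal]
    congr 1
    rw [Complex.ofReal_prod]
    exact Finset.prod_coe_sort S (fun i => ((s i : ℝ) : ℂ))
  rw [h1, Complex.re_sum]
  refine Finset.sum_congr rfl fun S _ => ?_
  rw [Complex.re_ofReal_mul]; rfl

noncomputable def cf {ι : Type*} [Fintype ι] [DecidableEq ι] {q : ℕ} (F : Fin q → Finset ι) : ℝ :=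
  ∑ δ : ι → Bool, ∏ k, ∏ i ∈ F k, sg (δ i)

lemma cf_nonneg {ι : Type*} [Fintype ι] [DecidableEq ι] {q : ℕ} (F : Fin q → Finset ι) :
    0 ≤ cf F := by
  have h : cf F = ∑ δ : ι → Bool, ∏ i, ∏ k, (if i ∈ F k then sg (δ i) else 1) := by
    unfold cf
    refine Finset.sum_congr rfl fun δ _ => ?_
    rw [Finset.prod_comm]
    refine Finset.prod_congr rfl fun k _ => ?_
    simp
  rw [h, ← Fintype.prod_sum (fun i b => ∏ k, (if i ∈ F k then sg b else 1))]
  refine Finset.prod_nonneg fun i _ => ?_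
  simp only [Fintype.sum_bool, sg]
  have : |∏ k, (if i ∈ F k then (if false = true then (1:ℝ) else -1) else 1)| ≤ 1 := by
    rw [Finset.abs_prod]
    refine Finset.prod_le_one (fun _ _ => abs_nonneg _) fun k _ => ?_
    split_ifs <;> simp
  have := (abs_le.1 this).1
  simp at this ⊢
  linarith

lemma PP_eq {ι : Type*} [Fintype ι] [DecidableEq ι] (B : Matrix ι ι ℂ) (q : ℕ) :
    PP B q = ∑ F : Fin q → Finset ι, cf F * ∏ k, pm B (F k) := by
  unfold PP cf
  simp_rw [det_expand (B := B), Fintype.sum_pow, Finset.prod_mul_distrib, Finset.sum_mul]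
  rw [Finset.sum_comm]

lemma cf_disjSum {ι κ : Type*} [Fintype ι] [DecidableEq ι] [Fintype κ] [DecidableEq κ] {q : ℕ}
    (F : Fin q → Finset ι) (G : Fin q → Finset κ) :
    cf (fun k => (F k).disjSum (G k)) = cf F * cf G := by
  unfold cf
  rw [Finset.sum_mul_sum, ← Fintype.sum_prod_type',
    ← (Equiv.sumArrowEquivProdArrow ι κ Bool).symm.sum_comp]
  refine Finset.sum_congr rfl fun δ _ => ?_
  simp only [Finset.prod_mul_distrib, Finset.prod_disjSum]
  rfl

open scoped ComplexOrder in
lemma PP_sum_le {ι κ : Type*} [Fintype ι] [DecidableEq ι] [Fintype κ] [DecidableEq κ]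
    {B : Matrix (ι ⊕ κ) (ι ⊕ κ) ℂ} (hB : B.PosSemidef) (q : ℕ) :
    PP B q ≤ PP B.toBlocks₁₁ q * PP B.toBlocks₂₂ q := by
  rw [PP_eq, PP_eq, PP_eq, Finset.sum_mul_sum, ← Fintype.sum_prod_type']
  let e : (Fin q → Finset ι) × (Fin q → Finset κ) ≃ (Fin q → Finset (ι ⊕ κ)) :=
    (Equiv.arrowProdEquivProdArrow (Fin q) _ _).symm.trans
      (Equiv.arrowCongr (Equiv.refl _) Finset.sumEquiv.symm.toEquiv)
  rw [← e.sum_comp]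
  refine Finset.sum_le_sum fun x _ => ?_
  have he : e x = fun k => (x.1 k).disjSum (x.2 k) := rfl
  rw [he, cf_disjSum]
  calc _ ≤ cf x.1 * cf x.2 * ∏ k, (pm B.toBlocks₁₁ (x.1 k) * pm B.toBlocks₂₂ (x.2 k)) := by
        refine mul_le_mul_of_nonneg_left ?_ (mul_nonneg (cf_nonneg _) (cf_nonneg _))
        exact Finset.prod_le_prod (fun k _ => pm_nonneg hB _) fun k _ => pm_disjSum hB _ _
    _ = _ := by rw [Finset.prod_mul_distrib]; ring

open scoped ComplexOrder in
lemma PP_ge {ι : Type*} [Fintype ι] [DecidableEq ι] {B : Matrix ι ι ℂ} (hB : B.PosSemidef)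
    (q : ℕ) : 2 ^ Fintype.card ι ≤ PP B q := by
  rw [PP_eq]
  refine le_trans ?_ (Finset.single_le_sum (f := fun F : Fin q → Finset ι => cf F * ∏ k, pm B (F k))
    (fun F _ => mul_nonneg (cf_nonneg _) (Finset.prod_nonneg fun k _ => pm_nonneg hB _))
    (Finset.mem_univ (fun _ => ∅)))
  simp [cf, pm]

lemma PP_submatrix {ι κ : Type*} [Fintype ι] [DecidableEq ι] [Fintype κ] [DecidableEq κ]
    (B : Matrix ι ι ℂ) (e : κ ≃ ι) (q : ℕ) : PP (B.submatrix e e) q = PP B q := by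
  unfold PP
  rw [← (Equiv.arrowCongr e.symm (Equiv.refl Bool)).sum_comp]
  refine Finset.sum_congr rfl fun δ _ => ?_
  congr 2
  rw [← det_submatrix_equiv_self e]
  congr 1
  ext i j
  simp [diagonal_mul, Matrix.one_apply]

lemma fhat_conj (g : AddCircle (1:ℝ) → ℝ) (n : ℤ) : star (fhat g n) = fhat g (-n) := by
  unfold fhat fourierCoeff
  rw [Complex.star_def, ← integral_conj]
  congr 1
  ext t
  simp [-fourier_apply, ← fourier_neg]

open scoped ComplexOrder in
lemma Tmat_psd (g : AddCircle (1:ℝ) → ℝ) (hg : Integrable g AddCircle.haarAddCircle)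
    (h0 : ∀ᵐ t ∂AddCircle.haarAddCircle, 0 ≤ g t) (N : ℕ) : (Tmat g N).PosSemidef := by
  refine .of_dotProduct_mulVec_nonneg ?_ fun x => ?_
  · ext i j
    rw [conjTranspose_apply]
    simp [Tmat, fhat_conj g, -Complex.star_def]
  · have hgc : Integrable (fun t => (g t : ℂ)) AddCircle.haarAddCircle := hg.ofReal
    have key : star x ⬝ᵥ (Tmat g N *ᵥ x) =
        ∫ t, ((g t * ‖∑ j : Fin N, x j * fourier ((j:ℕ):ℤ) t‖ ^ 2 : ℝ) : ℂ)
          ∂AddCircle.haarAddCircle := by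
      have : ∀ t : AddCircle (1:ℝ), ((g t * ‖∑ j : Fin N, x j * fourier ((j:ℕ):ℤ) t‖ ^ 2 : ℝ) : ℂ)
          = ∑ i : Fin N, ∑ j : Fin N, star (x i) * x j *
            (fourier (-(((i:ℕ):ℤ) - ((j:ℕ):ℤ))) t • (g t : ℂ)) := by
        intro t
        rw [Complex.ofReal_mul, Complex.ofReal_pow, ← Complex.conj_mul', map_sum, Finset.sum_mul_sum,
          Finset.mul_sum]
        refine Finset.sum_congr rfl fun i _ => ?_
        rw [Finset.mul_sum]
        refine Finset.sum_congr rfl fun j _ => ?_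
        rw [map_mul, ← fourier_neg, neg_sub, sub_eq_add_neg, fourier_add, smul_eq_mul,
          Complex.star_def]
        ring
      simp_rw [this]
      have hi : ∀ i j : Fin N, Integrable (fun t : AddCircle (1:ℝ) => star (x i) * x j *
            (fourier (-(((i:ℕ):ℤ) - ((j:ℕ):ℤ))) t • (g t : ℂ))) AddCircle.haarAddCircle :=
        fun i j => (hgc.fourier_smul _).const_mul _
      rw [integral_finsetSum _ (fun i _ => integrable_finsetSum _ fun j _ => hi i j)]
      simp only [dotProduct, mulVec]
      refine Finset.sum_congr rfl fun i _ => ?_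
      rw [integral_finsetSum _ (fun j _ => hi i j), Finset.mul_sum]
      refine Finset.sum_congr rfl fun j _ => ?_
      rw [integral_const_mul]
      simp only [Tmat, of_apply, fhat, fourierCoeff, Pi.star_apply]
      ring
    rw [key, integral_complex_ofReal]
    rw [Complex.zero_le_real]
    refine integral_nonneg_of_ae ?_
    filter_upwards [h0] with t ht
    exact mul_nonneg ht (sq_nonneg _)

lemma fhat_affine (f : AddCircle (1:ℝ) → ℝ) (hf : Integrable f AddCircle.haarAddCircle) (σ : ℝ)
    (n : ℤ) : fhat (fun t => σ * (2 * f t - 1)) n = σ * (2 * fhat f n - if n = 0 then 1 else 0) := by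
  have hfc : Integrable (fun t => (f t : ℂ)) AddCircle.haarAddCircle := hf.ofReal
  have h1 : ∫ t : AddCircle (1:ℝ), (fourier (-n) t : ℂ) ∂AddCircle.haarAddCircle
      = if n = 0 then 1 else 0 := by
    have := congrFun (fourierCoeff_fourier (T := (1:ℝ)) 0) n
    simp only [fourierCoeff, fourier_zero, smul_eq_mul, mul_one] at this
    rw [this, Pi.single_apply]
  unfold fhat fourierCoeff
  rw [← h1, ← integral_const_mul, ← integral_sub ((hfc.fourier_smul _).const_mul _), ← integral_const_mul]
  · congr 1
    ext t
    push_cast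
    simp only [smul_eq_mul]
    ring
  · have := (integrable_const (1:ℂ) (μ := AddCircle.haarAddCircle (T := (1:ℝ)))).fourier_smul (-n)
    simpa [-fourier_apply] using this

lemma cyl_eq (f : AddCircle (1:ℝ) → ℝ) (hf : Integrable f AddCircle.haarAddCircle) (c : Bool)
    {N : ℕ} (ε : Fin N → Bool) :
    cylWeight f ε = (1 / 2) ^ N * (1 + Matrix.diagonal (fun i => ((sg (ε i == c) : ℝ) : ℂ)) *
      Tmat (fun t => sg c * (2 * f t - 1)) N).det.re := by
  have h : (Matrix.diagonal (fun i => 2 * bc (ε i) - 1) * Tmat f N +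
      Matrix.diagonal (fun i => 1 - bc (ε i))) = (((1 / 2 : ℝ)) : ℂ) •
      (1 + Matrix.diagonal (fun i => ((sg (ε i == c) : ℝ) : ℂ)) *
      Tmat (fun t => sg c * (2 * f t - 1)) N) := by
    ext i j
    have hij : (((i:ℕ):ℤ) - ((j:ℕ):ℤ) = 0) ↔ i = j := by
      rw [sub_eq_zero, Nat.cast_inj, Fin.ext_iff]
    simp only [Matrix.add_apply, diagonal_mul, Matrix.smul_apply, Tmat, of_apply, fhat_affine f hf,
      hij, Matrix.one_apply, diagonal_apply, smul_eq_mul]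
    by_cases h : i = j <;> simp only [h, if_true, if_false] <;>
      rcases ε i with _ | _ <;> rcases ε j with _ | _ <;> rcases c with _ | _ <;>
        simp [bc, sg] <;> ring
  unfold cylWeight
  rw [h, det_smul, Fintype.card_fin, ← Complex.ofReal_pow, Complex.re_ofReal_mul]

lemma Sq_eq (f : AddCircle (1:ℝ) → ℝ) (hf : Integrable f AddCircle.haarAddCircle) (c : Bool)
    (q N : ℕ) :
    Sq f q N = ((1 / 2) ^ N) ^ q * PP (Tmat (fun t => sg c * (2 * f t - 1)) N) q := by
  unfold Sq PP
  have he : Function.Involutive (fun b : Bool => (b == c)) := by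
    intro b; cases b <;> cases c <;> rfl
  rw [← (Equiv.arrowCongr (Equiv.refl (Fin N)) he.toPerm).sum_comp, Finset.mul_sum]
  refine Finset.sum_congr rfl fun ε _ => ?_
  rw [cyl_eq f hf c, mul_pow]
  have hδ : ∀ i, ((Equiv.arrowCongr (Equiv.refl (Fin N)) he.toPerm) ε i == c) = ε i :=
    fun i => he (ε i)
  simp only [hδ]

open scoped ComplexOrder in
lemma PP_add_le (g : AddCircle (1:ℝ) → ℝ) (hg : Integrable g AddCircle.haarAddCircle)
    (h0 : ∀ᵐ t ∂AddCircle.haarAddCircle, 0 ≤ g t) (q m n : ℕ) :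
    PP (Tmat g (m + n)) q ≤ PP (Tmat g m) q * PP (Tmat g n) q := by
  rw [← PP_submatrix (Tmat g (m + n)) finSumFinEquiv q]
  have := PP_sum_le ((Tmat_psd g hg h0 (m + n)).submatrix finSumFinEquiv) q
  convert this using 3
  · ext i j; simp [toBlocks₁₁, Tmat]
  · ext i j; simp [toBlocks₂₂, Tmat]

open scoped ComplexOrder in
lemma main_aux (f : AddCircle (1:ℝ) → ℝ) (hf : Integrable f AddCircle.haarAddCircle) (c : Bool)
    (h0 : ∀ᵐ t ∂AddCircle.haarAddCircle, 0 ≤ sg c * (2 * f t - 1)) (q : ℕ) (hq : 2 ≤ q) :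
    ∃ L : ℝ, Tendsto
      (fun N : ℕ => Real.log (Sq f q N) / (-(((q : ℝ) - 1)) * (N : ℝ) * Real.log 2))
      atTop (nhds L) := by
  let g : AddCircle (1:ℝ) → ℝ := fun t => sg c * (2 * f t - 1)
  have hg : Integrable g AddCircle.haarAddCircle :=
    ((hf.const_mul 2).sub (integrable_const 1)).const_mul _
  have hge : ∀ N, 2 ^ N ≤ PP (Tmat g N) q := fun N => by
    simpa using PP_ge (Tmat_psd g hg h0 N) q
  have hpos : ∀ N, 0 < PP (Tmat g N) q := fun N => lt_of_lt_of_le (by positivity) (hge N)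
  let u : ℕ → ℝ := fun N => Real.log (PP (Tmat g N) q)
  have hu : Subadditive u := fun m n => by
    simp only [u]
    rw [← Real.log_mul (hpos m).ne' (hpos n).ne']
    exact Real.log_le_log (hpos _) (PP_add_le g hg h0 q m n)
  have hb : BddBelow (Set.range fun n => u n / n) := by
    refine ⟨0, ?_⟩
    rintro _ ⟨n, rfl⟩
    refine div_nonneg (Real.log_nonneg ((one_le_pow₀ (by norm_num)).trans (hge n))) (by positivity)
  have hlim := hu.tendsto_lim hb
  have hq1 : (q:ℝ) - 1 ≠ 0 := by
    have : (2:ℝ) ≤ q := by exact_mod_cast hq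
    linarith
  have hl2 : Real.log 2 ≠ 0 := (Real.log_pos (by norm_num)).ne'
  refine ⟨(hu.lim - q * Real.log 2) / (-((q:ℝ) - 1) * Real.log 2), ?_⟩
  refine ((hlim.sub_const (q * Real.log 2)).div_const (-((q:ℝ) - 1) * Real.log 2)).congr' ?_
  filter_upwards [eventually_gt_atTop 0] with N hN
  have hN' : (N:ℝ) ≠ 0 := by positivity
  rw [Sq_eq f hf c, Real.log_mul (by positivity) (hpos N).ne', Real.log_pow, Real.log_pow,
    one_div, Real.log_inv]
  change (u N / N - _) / _ = (_ + u N) / _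
  field_simp
  ring

/-- If `f ≤ 1/2` a.e. or `f ≥ 1/2` a.e., then the `L^q`-dimension of `μ_f^+` exists:
the limit of `log S_N^{(q)}(f) / (-(q-1)·N·log 2)` exists as a real number. -/
theorem Lq_dimension_exists
    (f : AddCircle (1:ℝ) → ℝ) (hmeas : Measurable f)
    (h0 : ∀ t, 0 ≤ f t) (h1 : ∀ t, f t ≤ 1)
    (hhalf : (∀ᵐ t : AddCircle (1:ℝ), f t ≤ 1 / 2) ∨
      (∀ᵐ t : AddCircle (1:ℝ), 1 / 2 ≤ f t))
    (q : ℕ) (hq : 2 ≤ q) :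
    ∃ L : ℝ, Tendsto
      (fun N : ℕ => Real.log (Sq f q N) / (-(((q : ℝ) - 1)) * (N : ℝ) * Real.log 2))
      atTop (nhds L) := by
  have hvol : (volume : Measure (AddCircle (1:ℝ))) = AddCircle.haarAddCircle := by
    rw [AddCircle.volume_eq_smul_haarAddCircle]; simp
  have hf : Integrable f AddCircle.haarAddCircle := by
    refine Integrable.of_bound hmeas.aestronglyMeasurable 1 (Eventually.of_forall fun t => ?_)
    rw [Real.norm_eq_abs, abs_of_nonneg (h0 t)]; exact h1 t
  rw [hvol] at hhalf
  rcases hhalf with h | h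
  · refine main_aux f hf false ?_ q hq
    filter_upwards [h] with t ht
    simp [sg]; linarith
  · refine main_aux f hf true ?_ q hq
    filter_upwards [h] with t ht
    simp [sg]; linarith
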